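/- Suppose z, w in the first Weyl algebra A₁ satisfy [z,w] = 1 and z is homogeneous, i.e., z ∈ D_k for some k ∈ ℤ. Then either z = λq and w = μp + l(q) with λμ = -1 and l ∈ K[X], or z = λp and w = μq + l(p) with λμ = 1 and l ∈ K[X]. In particular, z and w generate A₁. -/

import Mathlib

/-- The defining relation of the first Weyl algebra: `p q = q p + 1`,
where `p` and `q` are the images of the generators `0` and `1`. -/
inductive WeylRel (K : Type) [Field K] :
    FreeAlgebra K (Fin 2) → FreeAlgebra K (Fin 2) → Prop
  | rel : WeylRel K (FreeAlgebra.ι K 0 * FreeAlgebra.ι K 1)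
      (FreeAlgebra.ι K 1 * FreeAlgebra.ι K 0 + 1)

/-- The first Weyl algebra `A₁` over `K`. -/
abbrev Weyl (K : Type) [Field K] := RingQuot (WeylRel K)

/-- The generator `p` of `A₁`. -/
noncomputable def Wp (K : Type) [Field K] : Weyl K :=
  RingQuot.mkAlgHom K (WeylRel K) (FreeAlgebra.ι K 0)

/-- The generator `q` of `A₁`. -/
noncomputable def Wq (K : Type) [Field K] : Weyl K :=
  RingQuot.mkAlgHom K (WeylRel K) (FreeAlgebra.ι K 1)

/-- The homogeneous component `D_t = span{p^i q^s : s - i = t}` of `A₁`. -/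
noncomputable def WeylD (K : Type) [Field K] (t : ℤ) : Submodule K (Weyl K) :=
  Submodule.span K {x | ∃ i s : ℕ, (s : ℤ) - (i : ℤ) = t ∧ x = Wp K ^ i * Wq K ^ s}

open Polynomial

section CommutationRelation

variable {K A : Type*} [Field K] [Ring A] [Algebra K A]

theorem mul_aeval_eq_aeval_mul {a x y : A} (h : a * x = y * a) (f : K[X]) :
    a * aeval x f = aeval y f * a := by
  induction f using Polynomial.induction_on' with
  | add f g hf hg => simp only [map_add, mul_add, add_mul, hf, hg]
  | monomial n c =>
    have hn : a * x ^ n = y ^ n * a := SemiconjBy.pow_right h n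
    rw [aeval_monomial, aeval_monomial, ← mul_assoc, ← Algebra.commutes, mul_assoc, hn, mul_assoc]

theorem exists_eq_aeval_of_mem_span_pow {a x : A}
    (hx : x ∈ Submodule.span K {y | ∃ s : ℕ, y = a ^ s}) : ∃ l : K[X], x = aeval a l := by
  have hle : Submodule.span K {y | ∃ s : ℕ, y = a ^ s} ≤ LinearMap.range (aeval a).toLinearMap := by
    rw [Submodule.span_le]
    rintro _ ⟨s, rfl⟩
    exact ⟨X ^ s, by simp⟩
  obtain ⟨l, hl⟩ := hle hx
  exact ⟨l, hl.symm⟩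

theorem mem_adjoin_smul_pair {a b : A} {lam μ : K} (hlam : lam ≠ 0) (hμ : μ ≠ 0) (l : K[X]) :
    a ∈ Algebra.adjoin K {lam • a, μ • b + aeval a l} ∧
      b ∈ Algebra.adjoin K {lam • a, μ • b + aeval a l} := by
  set S := Algebra.adjoin K {lam • a, μ • b + aeval a l}
  have ha : a ∈ S := by
    rw [← inv_smul_smul₀ hlam a]
    exact S.smul_mem (Algebra.subset_adjoin (by simp)) _
  refine ⟨ha, ?_⟩
  have hl : aeval a l ∈ S :=
    Algebra.adjoin_le (Set.singleton_subset_iff.mpr ha) (aeval_mem_adjoin_singleton K a)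
  have hb : μ • b + aeval a l ∈ S := Algebra.subset_adjoin (by simp)
  rw [← inv_smul_smul₀ hμ b, ← add_sub_cancel_right (μ • b) (aeval a l)]
  exact S.smul_mem (sub_mem hb hl) _

variable {p q : A}

theorem mul_pow_of_mul_eq_mul_add_one (h : p * q = q * p + 1) (n : ℕ) :
    p * q ^ n = q ^ n * p + (n : K) • q ^ (n - 1) := by
  induction n with
  | zero => simp
  | succ n ih =>
    rw [pow_succ, ← mul_assoc, ih, add_mul, mul_assoc, h]
    rcases n with _ | n
    · simp
    · simp only [Nat.add_sub_cancel, smul_mul_assoc, mul_add, mul_one, ← mul_assoc, ← pow_succ]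
      push_cast
      module

theorem pow_mul_of_mul_eq_mul_add_one (h : p * q = q * p + 1) (n : ℕ) :
    p ^ n * q = q * p ^ n + (n : K) • p ^ (n - 1) := by
  induction n with
  | zero => simp
  | succ n ih =>
    rw [pow_succ', mul_assoc, ih, mul_add, ← mul_assoc, h]
    rcases n with _ | n
    · simp
    · simp only [Nat.add_sub_cancel, mul_smul_comm, ← pow_succ', add_mul, one_mul, mul_assoc]
      push_cast
      module

theorem pow_mul_aeval_of_mul_eq_mul_add_one (h : p * q = q * p + 1) (n : ℕ) (f : K[X]) :
    p ^ n * aeval (q * p) f = aeval (q * p) (f.comp (X + C (n : K))) * p ^ n := by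
  rw [aeval_comp]
  apply mul_aeval_eq_aeval_mul
  rw [← mul_assoc, pow_mul_of_mul_eq_mul_add_one (K := K) h]
  rcases n with _ | n
  · simp
  · simp [add_mul, mul_assoc, ← pow_succ, ← pow_succ', Algebra.smul_def]

theorem aeval_mul_pow_of_mul_eq_mul_add_one (h : p * q = q * p + 1) (n : ℕ) (f : K[X]) :
    aeval (q * p) f * q ^ n = q ^ n * aeval (q * p) (f.comp (X + C (n : K))) := by
  rw [aeval_comp]
  symm
  apply mul_aeval_eq_aeval_mul
  rw [mul_assoc, mul_pow_of_mul_eq_mul_add_one (K := K) h]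
  rcases n with _ | n
  · simp
  · simp only [map_add, aeval_X, aeval_C, mul_add, ← mul_assoc, ← pow_succ, ← pow_succ',
      Nat.add_sub_cancel, Algebra.smul_def, Algebra.commutes]

theorem pow_mul_pow_eq_aeval_descPochhammer (h : p * q = q * p + 1) (n : ℕ) :
    q ^ n * p ^ n = aeval (q * p) (descPochhammer K n) := by
  induction n with
  | zero => simp
  | succ n ih =>
    have key := pow_mul_aeval_of_mul_eq_mul_add_one h n (X - C (n : K))
    simp only [sub_comp, X_comp, C_comp, add_sub_cancel_right, aeval_X] at key
    rw [descPochhammer_succ_right, map_mul, ← ih, ← C_eq_natCast, mul_assoc, key, pow_succ,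
      pow_succ']
    simp only [mul_assoc]

theorem pow_mul_pow_eq_aeval_descPochhammer_comp (h : p * q = q * p + 1) (n : ℕ) :
    p ^ n * q ^ n = aeval (q * p) ((descPochhammer K n).comp (X + C (n : K))) := by
  induction n with
  | zero => simp
  | succ n ih =>
    have key := aeval_mul_pow_of_mul_eq_mul_add_one h 1
      ((descPochhammer K n).comp (X + C (n : K)))
    rw [pow_one] at key
    rw [pow_succ', pow_succ, mul_assoc, ← mul_assoc (p ^ n), ih, key, ← mul_assoc, h]
    have hX : q * p + 1 = aeval (q * p) (X + 1 : K[X]) := by simp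
    rw [hX, ← map_mul, descPochhammer_succ_right]
    congr 1
    simp only [comp_assoc, mul_comp, sub_comp, X_comp, natCast_comp, add_comp, C_comp]
    have hC : (C ((n + 1 : ℕ) : K) : K[X]) = (n : K[X]) + 1 := by simp
    rw [hC, mul_comm]
    congr 1
    · congr 1
      simp only [Nat.cast_one, map_one, map_natCast]
      ring
    · ring

end CommutationRelation

section Commutator

variable {K : Type*} [Field K] [CharZero K]

/-- A polynomial with a constant nonzero difference is affine. -/
theorem natDegree_eq_one_of_sub_comp_eq_C {H : K[X]} {m : ℕ} {c : K} (hc : c ≠ 0)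
    (hH : H - H.comp (X + C (m : K)) = C c) : H.natDegree = 1 := by
  have hm : (m : K) ≠ 0 := by
    rintro hm
    apply hc
    simpa [hm] using hH.symm
  have hev (x : K) : H.eval (x + m) = H.eval x - c := by
    have := congrArg (eval x) hH
    simp at this
    linear_combination -this
  have hmul (n : ℕ) : H.eval (n * m : K) = H.eval 0 - n * c := by
    induction n with
    | zero => simp
    | succ n ih =>
      push_cast
      rw [add_mul, one_mul, hev, ih]
      ring
  have key : H = C (-(c / m)) * X + C (H.eval 0) := by
    refine eq_of_infinite_eval_eq _ _ (Set.infinite_of_injective_forall_mem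
      (f := fun n : ℕ => (n * m : K)) (fun a b hab => ?_) fun n => ?_)
    · exact_mod_cast mul_right_cancel₀ hm hab
    · simp only [Set.mem_ofPred_eq, hmul, eval_add, eval_mul, eval_C, eval_X]
      field_simp
      ring
  rw [key]
  exact natDegree_linear (neg_ne_zero.mpr (div_ne_zero hc hm))

variable {A : Type*} [Ring A] [Algebra K A]

/-- Homogeneous elements of opposite degrees whose commutator is a nonzero scalar are scalar
multiples of the generators. -/
theorem exists_eq_C_of_commutator_eq_algebraMap {p q : A} (h : p * q = q * p + 1)
    (hinj : Function.Injective (aeval (R := K) (q * p))) {f g : K[X]} {m : ℕ} {c : K} (hc : c ≠ 0)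
    (hfg : (aeval (q * p) f * q ^ m) * (p ^ m * aeval (q * p) g) -
      (p ^ m * aeval (q * p) g) * (aeval (q * p) f * q ^ m) = algebraMap K A c) :
    m = 1 ∧ ∃ a b : K, f = C a ∧ g = C b ∧ a * b = -c := by
  set H := f * descPochhammer K m * g with hHdef
  have h₁ : (aeval (q * p) f * q ^ m) * (p ^ m * aeval (q * p) g) = aeval (q * p) H := by
    rw [mul_assoc, ← mul_assoc (q ^ m), pow_mul_pow_eq_aeval_descPochhammer (K := K) h,
      ← map_mul, ← map_mul, hHdef, mul_assoc]
  have h₂ : (p ^ m * aeval (q * p) g) * (aeval (q * p) f * q ^ m) =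
      aeval (q * p) (H.comp (X + C (m : K))) := by
    rw [mul_assoc, ← mul_assoc (aeval (q * p) g), ← map_mul,
      aeval_mul_pow_of_mul_eq_mul_add_one h, ← mul_assoc,
      pow_mul_pow_eq_aeval_descPochhammer_comp (K := K) h, ← map_mul, ← mul_comp, hHdef]
    congr 2
    ring
  have hH : H - H.comp (X + C (m : K)) = C c := by
    apply hinj
    rw [map_sub, ← h₁, ← h₂, hfg, aeval_C]
  have hdeg := natDegree_eq_one_of_sub_comp_eq_C hc hH
  have hH0 : H ≠ 0 := by
    rintro h0
    simp [h0] at hdeg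
  have hf0 : f ≠ 0 := by rintro rfl; simp [hHdef] at hH0
  have hg0 : g ≠ 0 := by rintro rfl; simp [hHdef] at hH0
  have hP0 : descPochhammer K m ≠ 0 := (monic_descPochhammer K m).ne_zero
  have hm0 : m ≠ 0 := by
    rintro rfl
    apply hc
    simpa using hH.symm
  rw [hHdef, natDegree_mul (mul_ne_zero hf0 hP0) hg0, natDegree_mul hf0 hP0,
    descPochhammer_natDegree] at hdeg
  obtain rfl : m = 1 := by lia
  obtain ⟨a, rfl⟩ := natDegree_eq_zero.mp (show f.natDegree = 0 by lia)
  obtain ⟨b, rfl⟩ := natDegree_eq_zero.mp (show g.natDegree = 0 by lia)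
  refine ⟨rfl, a, b, rfl, rfl, ?_⟩
  have := congrArg (eval 0) hH
  simp [hHdef] at this
  linear_combination -this

variable {V : Type*} [AddCommGroup V] [Module K V]

/-- The kernel of an operator that is diagonal on a spanning family with eigenvalues in `ℕ` is
spanned by the members of the family with eigenvalue `0`. -/
theorem mem_span_zero_of_diagonal (T : V →ₗ[K] V) (b : ℕ → ℕ → V)
    (hT : ∀ i s, T (b i s) = (i : K) • b i s) {x : V}
    (hx : x ∈ Submodule.span K {y | ∃ i s, y = b i s}) (hTx : T x = 0) :
    x ∈ Submodule.span K {y | ∃ s, y = b 0 s} := by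
  obtain ⟨n, hn⟩ : ∃ n, x ∈ Submodule.span K {y | ∃ i s, i ≤ n ∧ y = b i s} := by
    have mono {m n : ℕ} (hmn : m ≤ n) : Submodule.span K {y | ∃ i s, i ≤ m ∧ y = b i s} ≤
        Submodule.span K {y | ∃ i s, i ≤ n ∧ y = b i s} :=
      Submodule.span_mono fun y ⟨i, s, hi, hy⟩ => ⟨i, s, hi.trans hmn, hy⟩
    clear hTx
    induction hx using Submodule.span_induction with
    | mem y hy =>
      obtain ⟨i, s, rfl⟩ := hy
      exact ⟨i, Submodule.subset_span ⟨i, s, le_rfl, rfl⟩⟩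
    | zero => exact ⟨0, zero_mem _⟩
    | add y z _ _ hy hz =>
      obtain ⟨m, hm⟩ := hy
      obtain ⟨n, hn⟩ := hz
      exact ⟨max m n, add_mem (mono (le_max_left m n) hm) (mono (le_max_right m n) hn)⟩
    | smul a y _ hy =>
      obtain ⟨m, hm⟩ := hy
      exact ⟨m, Submodule.smul_mem _ a hm⟩
  clear hx
  induction n with
  | zero => simpa using hn
  | succ n ih =>
    apply ih
    let L : V →ₗ[K] V := LinearMap.id - ((n + 1 : ℕ) : K)⁻¹ • T
    have hL : L x = x := by simp [L, hTx]
    rw [← hL]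
    clear hL hTx ih
    suffices Submodule.span K {y | ∃ i s, i ≤ n + 1 ∧ y = b i s} ≤
        (Submodule.span K {y | ∃ i s, i ≤ n ∧ y = b i s}).comap L from this hn
    rw [Submodule.span_le]
    rintro y ⟨i, s, hi, rfl⟩
    have hLb : L (b i s) = (1 - ((n + 1 : ℕ) : K)⁻¹ * i) • b i s := by
      simp only [L, LinearMap.sub_apply, LinearMap.id_apply, LinearMap.smul_apply, hT]
      module
    rw [SetLike.mem_coe, Submodule.mem_comap, hLb]
    rcases hi.eq_or_lt with rfl | hi
    · rw [inv_mul_cancel₀ (Nat.cast_ne_zero.mpr n.succ_ne_zero), sub_self, zero_smul]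
      exact zero_mem _
    · exact Submodule.smul_mem _ _ (Submodule.subset_span ⟨i, s, Nat.lt_succ_iff.mp hi, rfl⟩)

end Commutator

section Weyl

variable (K : Type) [Field K]

theorem Wp_mul_Wq : Wp K * Wq K = Wq K * Wp K + 1 := by
  have := RingQuot.mkAlgHom_rel K (WeylRel.rel (K := K))
  rwa [map_mul, map_add, map_mul, map_one] at this

variable {K}

theorem Weyl.induction {P : Weyl K → Prop} (scalar : ∀ r, P (algebraMap K _ r)) (hp : P (Wp K))
    (hq : P (Wq K)) (mul : ∀ a b, P a → P b → P (a * b)) (add : ∀ a b, P a → P b → P (a + b))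
    (x : Weyl K) : P x := by
  obtain ⟨y, rfl⟩ := RingQuot.mkAlgHom_surjective K (WeylRel K) x
  induction y using FreeAlgebra.induction with
  | grade0 r => simpa using scalar r
  | grade1 i => fin_cases i <;> assumption
  | mul a b ha hb => simpa using mul _ _ ha hb
  | add a b ha hb => simpa using add _ _ ha hb

/-- The universal property of the Weyl algebra. -/
noncomputable def Weyl.lift {B : Type*} [Ring B] [Algebra K B] (P Q : B) (h : P * Q = Q * P + 1) :
    Weyl K →ₐ[K] B :=
  RingQuot.liftAlgHom K ⟨FreeAlgebra.lift K ![P, Q], by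
    rintro _ _ ⟨⟩
    simpa using h⟩

section lift

variable {B : Type*} [Ring B] [Algebra K B] (P Q : B) (h : P * Q = Q * P + 1)

@[simp]
theorem Weyl.lift_Wp : Weyl.lift P Q h (Wp K) = P := by
  simp [Weyl.lift, Wp]

@[simp]
theorem Weyl.lift_Wq : Weyl.lift P Q h (Wq K) = Q := by
  simp [Weyl.lift, Wq]

end lift

theorem Weyl.eq_top_of_mem {S : Subalgebra K (Weyl K)} (hp : Wp K ∈ S) (hq : Wq K ∈ S) :
    S = ⊤ :=
  eq_top_iff.mpr fun x _ => Weyl.induction (P := (· ∈ S)) S.algebraMap_mem hp hq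
    (fun _ _ => mul_mem) (fun _ _ => add_mem) x

theorem mem_span_Wp_pow_mul_Wq_pow (x : Weyl K) :
    x ∈ Submodule.span K {y | ∃ i s : ℕ, y = Wp K ^ i * Wq K ^ s} := by
  set S := Submodule.span K {y | ∃ i s : ℕ, y = Wp K ^ i * Wq K ^ s}
  have hbase (i s : ℕ) : Wp K ^ i * Wq K ^ s ∈ S := Submodule.subset_span ⟨i, s, rfl⟩
  have hleft (a : Weyl K) (ha : ∀ i s : ℕ, a * (Wp K ^ i * Wq K ^ s) ∈ S) :
      ∀ y ∈ S, a * y ∈ S := by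
    intro y hy
    induction hy using Submodule.span_induction with
    | mem y hy =>
      obtain ⟨i, s, rfl⟩ := hy
      exact ha i s
    | zero => simp
    | add y z _ _ hy hz => simpa [mul_add] using add_mem hy hz
    | smul c y _ hy => simpa using Submodule.smul_mem _ c hy
  suffices ∀ y ∈ S, x * y ∈ S by simpa using this 1 (by simpa using hbase 0 0)
  induction x using Weyl.induction with
  | scalar r => exact fun y hy => by simpa [← Algebra.smul_def] using S.smul_mem r hy
  | hp => exact hleft _ fun i s => by simpa [← mul_assoc, ← pow_succ'] using hbase (i + 1) s
  | hq =>
    refine hleft _ fun i s => ?_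
    rw [← mul_assoc, ← sub_eq_of_eq_add (pow_mul_of_mul_eq_mul_add_one (K := K) (Wp_mul_Wq K) i),
      sub_mul, mul_assoc, ← pow_succ', smul_mul_assoc]
    exact sub_mem (hbase _ _) (S.smul_mem _ (hbase _ _))
  | mul a b ha hb => exact fun y hy => by simpa [mul_assoc] using ha _ (hb _ hy)
  | add a b ha hb => exact fun y hy => by simpa [add_mul] using add_mem (ha _ hy) (hb _ hy)

open AddMonoidAlgebra in
/-- The homomorphism recording the grading of the Weyl algebra: `x ∈ D_t` is sent to `x T ^ t`. -/
noncomputable def Weyl.grading : Weyl K →ₐ[K] AddMonoidAlgebra (Weyl K) ℤ :=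
  Weyl.lift (single (-1) (Wp K)) (single 1 (Wq K)) (by
    rw [single_mul_single, single_mul_single, Wp_mul_Wq]
    rw [neg_add_cancel, add_neg_cancel, AddMonoidAlgebra.single_add, AddMonoidAlgebra.one_def])

theorem Weyl.grading_Wp_pow_mul_Wq_pow (i s : ℕ) : Weyl.grading (Wp K ^ i * Wq K ^ s) =
    AddMonoidAlgebra.single ((s : ℤ) - i) (Wp K ^ i * Wq K ^ s) := by
  simp only [Weyl.grading, map_mul, map_pow, Weyl.lift_Wp, Weyl.lift_Wq,
    AddMonoidAlgebra.single_pow, AddMonoidAlgebra.single_mul_single]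
  congr 1
  simp
  ring

theorem Weyl.grading_of_mem {t : ℤ} {x : Weyl K} (hx : x ∈ WeylD K t) :
    Weyl.grading x = AddMonoidAlgebra.single t x := by
  induction hx using Submodule.span_induction with
  | mem x hx =>
    obtain ⟨i, s, rfl, rfl⟩ := hx
    exact Weyl.grading_Wp_pow_mul_Wq_pow i s
  | zero => simp
  | add x y _ _ hx hy => rw [map_add, hx, hy, AddMonoidAlgebra.single_add]
  | smul c x _ hx => rw [map_smul, hx, AddMonoidAlgebra.smul_single]

theorem Weyl.coeff_grading_mem (x : Weyl K) (t : ℤ) :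
    (Weyl.grading x).coeff t ∈ WeylD K t := by
  induction mem_span_Wp_pow_mul_Wq_pow x using Submodule.span_induction with
  | mem x hx =>
    obtain ⟨i, s, rfl⟩ := hx
    rw [Weyl.grading_Wp_pow_mul_Wq_pow, AddMonoidAlgebra.coeff_single, Finsupp.single_apply]
    split_ifs with h
    · exact Submodule.subset_span ⟨i, s, h, rfl⟩
    · exact zero_mem _
  | zero => simp
  | add x y _ _ hx hy => simpa using add_mem hx hy
  | smul c x _ hx => simpa using Submodule.smul_mem _ c hx

/-- A homogeneous element with a commutator partner has a homogeneous one. -/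
theorem exists_homogeneous_commutator_eq_one {z w : Weyl K} (hc : z * w - w * z = 1) {k : ℤ}
    (hz : z ∈ WeylD K k) : ∃ v ∈ WeylD K (-k), z * v - v * z = 1 := by
  refine ⟨_, Weyl.coeff_grading_mem w (-k), ?_⟩
  have := congrArg (fun x => (Weyl.grading x).coeff 0) hc
  simp only [map_sub, map_mul, map_one, Weyl.grading_of_mem hz, AddMonoidAlgebra.coeff_sub,
    Finsupp.sub_apply] at this
  rw [AddMonoidAlgebra.coeff_single_mul_eq_mul_coeff (m₂ := -k),
    AddMonoidAlgebra.coeff_mul_single_eq_coeff_mul (m₂ := -k)] at this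
  · rwa [AddMonoidAlgebra.one_def, AddMonoidAlgebra.coeff_single, Finsupp.single_eq_same] at this
  · intros; lia
  · intros; lia

theorem exists_eq_aeval_mul_pow {m : ℕ} {x : Weyl K} (hx : x ∈ WeylD K m) :
    ∃ f : K[X], x = aeval (Wq K * Wp K) f * Wq K ^ m := by
  induction hx using Submodule.span_induction with
  | mem x hx =>
    obtain ⟨i, s, hs, rfl⟩ := hx
    obtain rfl : s = i + m := by lia
    exact ⟨_, by rw [pow_add, ← mul_assoc,
      pow_mul_pow_eq_aeval_descPochhammer_comp (K := K) (Wp_mul_Wq K)]⟩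
  | zero => exact ⟨0, by simp⟩
  | add x y _ _ hx hy =>
    obtain ⟨f, rfl⟩ := hx
    obtain ⟨g, rfl⟩ := hy
    exact ⟨f + g, by rw [map_add, add_mul]⟩
  | smul c x _ hx =>
    obtain ⟨f, rfl⟩ := hx
    exact ⟨c • f, by rw [map_smul, smul_mul_assoc]⟩

theorem exists_eq_pow_mul_aeval {m : ℕ} {x : Weyl K} (hx : x ∈ WeylD K (-m)) :
    ∃ g : K[X], x = Wp K ^ m * aeval (Wq K * Wp K) g := by
  induction hx using Submodule.span_induction with
  | mem x hx =>
    obtain ⟨i, s, hs, rfl⟩ := hx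
    obtain rfl : i = m + s := by lia
    exact ⟨_, by rw [pow_add, mul_assoc,
      pow_mul_pow_eq_aeval_descPochhammer_comp (K := K) (Wp_mul_Wq K)]⟩
  | zero => exact ⟨0, by simp⟩
  | add x y _ _ hx hy =>
    obtain ⟨f, rfl⟩ := hx
    obtain ⟨g, rfl⟩ := hy
    exact ⟨f + g, by rw [map_add, mul_add]⟩
  | smul c x _ hx =>
    obtain ⟨f, rfl⟩ := hx
    exact ⟨c • f, by rw [map_smul, mul_smul_comm]⟩

variable [CharZero K]

theorem aeval_Wq_mul_Wp_injective : Function.Injective (aeval (R := K) (Wq K * Wp K)) := by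
  let ρ : Weyl K →ₐ[K] Module.End K K[X] :=
    Weyl.lift (Polynomial.derivative) (LinearMap.mulLeft K X) (by
      refine LinearMap.ext fun f => ?_
      simp [add_comm])
  have hρ (n : ℕ) : (ρ (Wq K * Wp K)).HasEigenvector (n : K) (X ^ n) := by
    rw [Module.End.hasEigenvector_iff, Module.End.mem_eigenspace_iff]
    refine ⟨?_, pow_ne_zero _ X_ne_zero⟩
    rcases n with _ | n
    · simp [ρ]
    · simp [ρ, smul_eq_C_mul]
      ring
  refine (injective_iff_map_eq_zero _).mpr fun f hf => ?_
  refine eq_zero_of_infinite_isRoot f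
    (Set.infinite_of_injective_forall_mem (Nat.cast_injective (R := K)) fun n => ?_)
  have := Module.End.aeval_apply_of_hasEigenvector (p := f) (hρ n)
  rw [aeval_algHom_apply, hf, map_zero, LinearMap.zero_apply] at this
  exact (smul_eq_zero.mp this.symm).resolve_right (pow_ne_zero _ X_ne_zero)

theorem exists_eq_aeval_Wq {x : Weyl K} (hx : x * Wq K = Wq K * x) :
    ∃ l : K[X], x = aeval (Wq K) l := by
  let T : Weyl K →ₗ[K] Weyl K := LinearMap.mulLeft K (Wp K) ∘ₗ
    (LinearMap.mulRight K (Wq K) - LinearMap.mulLeft K (Wq K))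
  have hT (i s : ℕ) : T (Wp K ^ i * Wq K ^ s) = (i : K) • (Wp K ^ i * Wq K ^ s) := by
    have h := pow_mul_of_mul_eq_mul_add_one (K := K) (Wp_mul_Wq K) i
    have : T (Wp K ^ i * Wq K ^ s) =
        Wp K * ((Wp K ^ i * Wq K - Wq K * Wp K ^ i) * Wq K ^ s) := by
      simp only [T, LinearMap.comp_apply, LinearMap.sub_apply, LinearMap.mulLeft_apply,
        LinearMap.mulRight_apply, sub_mul, mul_assoc, ← pow_succ, ← pow_succ']
    rw [this, h, add_sub_cancel_left]
    rcases i with _ | i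
    · simp
    · simp [← mul_assoc, ← pow_succ']
  simpa using exists_eq_aeval_of_mem_span_pow (K := K) (by
    simpa using mem_span_zero_of_diagonal T _ hT (mem_span_Wp_pow_mul_Wq_pow x) (by simp [T, hx]))

theorem exists_eq_aeval_Wp {x : Weyl K} (hx : Wp K * x = x * Wp K) :
    ∃ l : K[X], x = aeval (Wp K) l := by
  let T : Weyl K →ₗ[K] Weyl K := LinearMap.mulRight K (Wq K) ∘ₗ
    (LinearMap.mulLeft K (Wp K) - LinearMap.mulRight K (Wp K))
  have hT (s i : ℕ) : T (Wp K ^ i * Wq K ^ s) = (s : K) • (Wp K ^ i * Wq K ^ s) := by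
    have h := mul_pow_of_mul_eq_mul_add_one (K := K) (Wp_mul_Wq K) s
    have : T (Wp K ^ i * Wq K ^ s) =
        Wp K ^ i * (Wp K * Wq K ^ s - Wq K ^ s * Wp K) * Wq K := by
      simp only [T, LinearMap.comp_apply, LinearMap.sub_apply, LinearMap.mulLeft_apply,
        LinearMap.mulRight_apply, mul_sub, ← mul_assoc, ← pow_succ, ← pow_succ']
    rw [this, h, add_sub_cancel_left]
    rcases s with _ | s
    · simp
    · simp [mul_assoc, ← pow_succ]
  have hx' : x ∈ Submodule.span K {y | ∃ s i : ℕ, y = Wp K ^ i * Wq K ^ s} := by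
    refine Submodule.span_mono ?_ (mem_span_Wp_pow_mul_Wq_pow x)
    rintro _ ⟨i, s, rfl⟩
    exact ⟨s, i, rfl⟩
  exact exists_eq_aeval_of_mem_span_pow (K := K) (by
    simpa using mem_span_zero_of_diagonal T (fun s i => Wp K ^ i * Wq K ^ s) hT hx'
      (by simp [T, hx]))

end Weyl

/-- If `[z,w] = 1` and `z` is homogeneous (`z ∈ D_k`), then either `z = λq`,
`w = μp + l(q)` with `λμ = -1`, or `z = λp`, `w = μq + l(p)` with `λμ = 1`;
in particular `z` and `w` generate `A₁`. -/
theorem weyl_homogeneous_commutator_one (K : Type) [Field K] [CharZero K]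
    (z w : Weyl K) (hc : z * w - w * z = 1) (k : ℤ) (hz : z ∈ WeylD K k) :
    ((∃ (lam μ : K) (l : Polynomial K), lam * μ = -1 ∧
        z = lam • Wq K ∧ w = μ • Wp K + Polynomial.aeval (Wq K) l) ∨
      (∃ (lam μ : K) (l : Polynomial K), lam * μ = 1 ∧
        z = lam • Wp K ∧ w = μ • Wq K + Polynomial.aeval (Wp K) l)) ∧
      Algebra.adjoin K {z, w} = (⊤ : Subalgebra K (Weyl K)) := by
  have classification : (∃ (lam μ : K) (l : Polynomial K), lam * μ = -1 ∧
        z = lam • Wq K ∧ w = μ • Wp K + Polynomial.aeval (Wq K) l) ∨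
      (∃ (lam μ : K) (l : Polynomial K), lam * μ = 1 ∧
        z = lam • Wp K ∧ w = μ • Wq K + Polynomial.aeval (Wp K) l) := by
    obtain ⟨v, hv, hzv⟩ := exists_homogeneous_commutator_eq_one hc hz
    obtain ⟨m, rfl | rfl⟩ := k.eq_nat_or_neg
    · obtain ⟨f, rfl⟩ := exists_eq_aeval_mul_pow hz
      obtain ⟨g, rfl⟩ := exists_eq_pow_mul_aeval hv
      obtain ⟨rfl, a, b, rfl, rfl, hab⟩ := exists_eq_C_of_commutator_eq_algebraMap (Wp_mul_Wq K)
        aeval_Wq_mul_Wp_injective one_ne_zero (hzv.trans (map_one _).symm)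
      have ha : a ≠ 0 := by rintro rfl; simp at hab
      simp only [pow_one, aeval_C, ← Algebra.smul_def, ← Algebra.commutes] at hc hzv ⊢
      obtain ⟨l, hl⟩ := exists_eq_aeval_Wq (x := w - b • Wp K) (by
        apply smul_right_injective _ ha
        have := hzv.trans hc.symm
        simp only [smul_mul_assoc, mul_smul_comm, mul_sub, sub_mul, smul_sub] at this ⊢
        linear_combination (norm := module) this)
      exact Or.inl ⟨a, b, l, hab, rfl, by rw [← hl, add_sub_cancel]⟩
    · obtain ⟨g, rfl⟩ := exists_eq_pow_mul_aeval hz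
      rw [neg_neg] at hv
      obtain ⟨f, rfl⟩ := exists_eq_aeval_mul_pow hv
      obtain ⟨rfl, a, b, rfl, rfl, hab⟩ := exists_eq_C_of_commutator_eq_algebraMap (Wp_mul_Wq K)
        aeval_Wq_mul_Wp_injective (neg_ne_zero.mpr one_ne_zero)
        (by rw [← neg_sub, hzv, map_neg, map_one])
      have hb : b ≠ 0 := by rintro rfl; simp at hab
      simp only [pow_one, aeval_C, ← Algebra.smul_def, ← Algebra.commutes] at hc hzv ⊢
      obtain ⟨l, hl⟩ := exists_eq_aeval_Wp (x := w - a • Wq K) (by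
        apply smul_right_injective _ hb
        have := hzv.trans hc.symm
        simp only [smul_mul_assoc, mul_smul_comm, mul_sub, sub_mul, smul_sub] at this ⊢
        linear_combination (norm := module) -this)
      exact Or.inr ⟨b, a, l, by rw [mul_comm, hab, neg_neg], rfl, by rw [← hl, add_sub_cancel]⟩
  refine ⟨classification, ?_⟩
  obtain ⟨lam, μ, l, h, rfl, rfl⟩ | ⟨lam, μ, l, h, rfl, rfl⟩ := classification
  · have h0 : lam * μ ≠ 0 := by simp [h]
    obtain ⟨hq, hp⟩ := mem_adjoin_smul_pair (a := Wq K) (b := Wp K) (left_ne_zero_of_mul h0)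
      (right_ne_zero_of_mul h0) l
    exact Weyl.eq_top_of_mem hp hq
  · have h0 : lam * μ ≠ 0 := by simp [h]
    obtain ⟨hp, hq⟩ := mem_adjoin_smul_pair (a := Wp K) (b := Wq K) (left_ne_zero_of_mul h0)
      (right_ne_zero_of_mul h0) l
    exact Weyl.eq_top_of_mem hp hq
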